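/- Let SO(3) act by conjugation, g·A = gAgᵀ, on V = {A ∈ M₃(ℂ) : Aᵀ = A, tr A = 0}, the 5-dimensional complex space of traceless complex symmetric 3×3 matrices, with moment map J : V → so(3)*, J(A)(ξ) = Im tr((ξA − Aξ)\overline{A}) for ξ ∈ so(3), and set M = J⁻¹(0), M₀ = M/SO(3). Let S₃ act on the plane P = {z ∈ ℂ³ : z₁ + z₂ + z₃ = 0} by permuting coordinates, with orbit space Y = P/S₃. Then there exists a ℤ-graded regular diffeomorphism from M₀ to Y. -/

import Mathlib

/-!
Statement 11: The symplectic quotient of the SO(3)-module `V` of traceless complex symmetric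
3×3 matrices (≅ the SU(2)-module R₄) is ℤ-graded regularly diffeomorphic to the linear
orbifold `P/S₃`, where `P = {z ∈ ℂ³ : z₁+z₂+z₃ = 0}` with `S₃` permuting the coordinates.
-/

namespace Stmt11

noncomputable section

open MvPolynomial Complex

/-- Evaluation of a real polynomial in the real coordinates (indexed by `ι × Bool`) at a
point of `ι → ℂ`. -/
def evalR {ι : Type} (p : MvPolynomial (ι × Bool) ℝ) (z : ι → ℂ) : ℝ :=
  MvPolynomial.eval (fun q => if q.2 then (z q.1).im else (z q.1).re) p

/-- The special orthogonal group SO(3) as a set of real matrices. -/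
def SO3 : Set (Matrix (Fin 3) (Fin 3) ℝ) :=
  {g | g * g.transpose = 1 ∧ g.det = 1}

/-- The SO(3)-module `V` of traceless symmetric complex 3×3 matrices. -/
def Vset : Set (Matrix (Fin 3) (Fin 3) ℂ) :=
  {A | A.transpose = A ∧ A.trace = 0}

/-- The action `g·A = gAgᵀ` on complex matrices (`g` a real matrix). -/
def act (g : Matrix (Fin 3) (Fin 3) ℝ) (A : Matrix (Fin 3) (Fin 3) ℂ) :
    Matrix (Fin 3) (Fin 3) ℂ :=
  g.map Complex.ofReal * A * (g.map Complex.ofReal).transpose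

/-- The zero set `M = J⁻¹(0) ⊆ V` of the moment map
`J(A)(ξ) = Im tr((ξA − Aξ)·conj(A))`, `ξ` ranging over `so(3)` (real skew-symmetric). -/
def Mset : Set (Matrix (Fin 3) (Fin 3) ℂ) :=
  {A | A ∈ Vset ∧ ∀ ξ : Matrix (Fin 3) (Fin 3) ℝ, ξ.transpose = -ξ →
    (((ξ.map Complex.ofReal * A - A * ξ.map Complex.ofReal) *
      A.map (starRingEnd ℂ)).trace).im = 0}

/-- Orbit equivalence on `M` for the SO(3)-action. -/
def relM (A B : Mset) : Prop :=
  ∃ g ∈ SO3, (B : Matrix (Fin 3) (Fin 3) ℂ) = act g (A : Matrix (Fin 3) (Fin 3) ℂ)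

/-- The symplectic quotient `M₀ = M/SO(3)` with the quotient topology. -/
def M₀ : Type := Quot relM

instance : TopologicalSpace M₀ := instTopologicalSpaceQuot

/-- The degree-`d` regular functions on `M₀`. -/
def RegM (d : ℕ) : Set (M₀ → ℝ) :=
  {f | ∃ p : MvPolynomial ((Fin 3 × Fin 3) × Bool) ℝ, p.IsHomogeneous d ∧
    (∀ g ∈ SO3, ∀ A ∈ Vset,
      evalR p (fun q => act g A q.1 q.2) = evalR p (fun q => A q.1 q.2)) ∧
    ∀ x : Mset, f (Quot.mk _ x) = evalR p (fun q => (x : Matrix (Fin 3) (Fin 3) ℂ) q.1 q.2)}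

/-- The plane `P = {z ∈ ℂ³ : z₁ + z₂ + z₃ = 0}`. -/
def P : Set (Fin 3 → ℂ) := {z | z 0 + z 1 + z 2 = 0}

/-- Orbit equivalence on `P` for the coordinate-permutation action of `S₃`. -/
def relP (z w : P) : Prop :=
  ∃ σ : Equiv.Perm (Fin 3), ∀ i, (w : Fin 3 → ℂ) i = (z : Fin 3 → ℂ) (σ i)

/-- The linear symplectic orbifold `Y = P/S₃` with the quotient topology. -/
def Y : Type := Quot relP

instance : TopologicalSpace Y := instTopologicalSpaceQuot

/-- The degree-`d` regular functions on `Y = P/S₃`. -/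
def RegY (d : ℕ) : Set (Y → ℝ) :=
  {f | ∃ p : MvPolynomial (Fin 3 × Bool) ℝ, p.IsHomogeneous d ∧
    (∀ σ : Equiv.Perm (Fin 3), ∀ z ∈ P, evalR p (fun i => z (σ i)) = evalR p z) ∧
    ∀ z : P, f (Quot.mk _ z) = evalR p (z : Fin 3 → ℂ)}

/-- Simultaneous diagonalization of two commuting real symmetric matrices. -/
theorem simul_diag (X Y : Matrix (Fin 3) (Fin 3) ℝ) (hX : X.transpose = X)
    (hY : Y.transpose = Y) (hXY : X * Y = Y * X) :
    ∃ (g : Matrix (Fin 3) (Fin 3) ℝ) (x y : Fin 3 → ℝ), g * g.transpose = 1 ∧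
      g * X * g.transpose = Matrix.diagonal x ∧ g * Y * g.transpose = Matrix.diagonal y := by
  classical
  let A := Matrix.toEuclideanLin X
  let B := Matrix.toEuclideanLin Y
  have hA : A.IsSymmetric := by
    apply Matrix.isSymmetric_toEuclideanLin_iff.mpr
    rw [Matrix.IsHermitian, Matrix.conjTranspose_eq_transpose_of_trivial, hX]
  have hB : B.IsSymmetric := by
    apply Matrix.isSymmetric_toEuclideanLin_iff.mpr
    rw [Matrix.IsHermitian, Matrix.conjTranspose_eq_transpose_of_trivial, hY]
  have hAB : Commute A B := by
    apply LinearMap.ext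
    intro v
    simp [A, B, Matrix.toLpLin_apply, hXY]
  have hI := LinearMap.IsSymmetric.directSum_isInternal_of_commute hA hB hAB
  have hO := LinearMap.IsSymmetric.orthogonalFamily_eigenspace_inf_eigenspace hA hB
  rw [← DirectSum.isInternal_ne_bot_iff] at hI
  have hind := hO.independent
  let := hind.fintypeNeBotOfFiniteDimensional
  have hO' := hO.comp (γ := {i : ℝ × ℝ // Module.End.eigenspace A i.2 ⊓ Module.End.eigenspace B i.1 ≠ ⊥}) (f := Subtype.val) Subtype.val_injective
  have hn : Module.finrank ℝ (EuclideanSpace ℝ (Fin 3)) = 3 := by simp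
  let b := hI.subordinateOrthonormalBasis hn hO'
  have hb : ∀ i, ∃ x y : ℝ, X.mulVec (b i) = x • (b i).ofLp ∧ Y.mulVec (b i) = y • (b i).ofLp := by
    intro i
    have h := hI.subordinateOrthonormalBasis_subordinate hn i hO'
    rw [Submodule.mem_inf, Module.End.mem_eigenspace_iff, Module.End.mem_eigenspace_iff] at h
    refine ⟨_, _, congrArg WithLp.ofLp h.1, congrArg WithLp.ofLp h.2⟩
  choose x y hx hy using hb
  have horth : ∀ i j, ∑ k, b i k * b j k = if i = j then 1 else 0 := by
    intro i j
    have := (orthonormal_iff_ite.mp b.orthonormal) j i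
    rw [PiLp.inner_apply] at this
    simpa [eq_comm] using this
  have key : ∀ (Z : Matrix (Fin 3) (Fin 3) ℝ) (w : Fin 3 → ℝ),
      (∀ i, Z.mulVec (b i) = w i • (b i).ofLp) →
      (Matrix.of fun i j => b i j) * Z * (Matrix.of fun i j => b i j).transpose
        = Matrix.diagonal w := by
    intro Z w h
    ext i j
    rw [Matrix.mul_assoc, Matrix.mul_apply]
    have : ∀ k, (Z * (Matrix.of fun i j => b i j).transpose) k j = w j * b j k := by
      intro k
      have := congrFun (h j) k
      simpa [Matrix.mul_apply, Matrix.mulVec, dotProduct] using this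
    simp only [this, Matrix.of_apply, Matrix.diagonal_apply]
    calc _ = w j * ∑ k, b i k * b j k := by
            rw [Finset.mul_sum]; exact Finset.sum_congr rfl fun k _ => by ring
      _ = _ := by rw [horth]; split_ifs with h <;> simp [h]
  refine ⟨Matrix.of fun i j => b i j, x, y, ?_, key X x hx, key Y y hy⟩
  ext i j
  simp [Matrix.mul_apply, horth, Matrix.one_apply]

theorem perm_of_poly (z w : Fin 3 → ℂ)
    (h : ∀ t : ℂ, ∏ i, (t - z i) = ∏ i, (t - w i)) :
    ∃ σ : Equiv.Perm (Fin 3), ∀ i, w i = z (σ i) := by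
  have hp : (∏ i, (Polynomial.X - Polynomial.C (z i))) = ∏ i, (Polynomial.X - Polynomial.C (w i)) := by
    apply Polynomial.funext
    intro t
    simpa [Polynomial.eval_prod] using h t
  have hm : Multiset.map z Finset.univ.val = Multiset.map w Finset.univ.val := by
    have := congrArg Polynomial.roots hp
    have e : ∀ v : Fin 3 → ℂ, ∏ i, (Polynomial.X - Polynomial.C (v i)) =
        (Multiset.map (fun a => Polynomial.X - Polynomial.C a)
          (Multiset.map v Finset.univ.val)).prod := by
      intro v
      rw [Multiset.map_map]; rfl
    rwa [e, e, Polynomial.roots_multiset_prod_X_sub_C, Polynomial.roots_multiset_prod_X_sub_C] at this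
  classical
  have hc : ∀ c, Fintype.card {i // w i = c} = Fintype.card {i // z i = c} := by
    intro c
    have := congrArg (Multiset.count c) hm
    rw [Multiset.count_map, Multiset.count_map] at this
    rw [Fintype.card_subtype, Fintype.card_subtype]
    simp only [eq_comm (a := c)] at this
    exact this.symm
  exact ⟨Equiv.ofFiberEquiv fun c => Fintype.equivOfCardEq (hc c),
    fun i => (Equiv.ofFiberEquiv_map _ i).symm⟩

theorem mem_SO3_neg {g : Matrix (Fin 3) (Fin 3) ℝ} (hg : g * g.transpose = 1) :
    g ∈ SO3 ∨ -g ∈ SO3 := by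
  have h := congrArg Matrix.det hg
  rw [Matrix.det_mul, Matrix.det_transpose, Matrix.det_one] at h
  rcases mul_self_eq_one_iff.mp h with h | h
  · exact Or.inl ⟨hg, h⟩
  · refine Or.inr ⟨by simpa using hg, ?_⟩
    rw [Matrix.det_neg, h]; norm_num

theorem act_neg (g A) : act (-g) A = act g A := by
  have : (-g).map Complex.ofReal = - g.map Complex.ofReal := by ext; simp
  simp [act, this]

theorem act_act (g h A) : act g (act h A) = act (g * h) A := by
  have : (g * h).map Complex.ofReal = g.map Complex.ofReal * h.map Complex.ofReal :=
    Matrix.map_mul (f := Complex.ofRealHom)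
  simp only [act, this, Matrix.transpose_mul, Matrix.mul_assoc]

theorem act_one (A) : act 1 A = A := by
  have : (1 : Matrix (Fin 3) (Fin 3) ℝ).map Complex.ofReal = 1 := by
    simp
  simp [act, this]

theorem SO3_transpose {g} (hg : g ∈ SO3) : g.transpose ∈ SO3 :=
  ⟨by simpa using mul_eq_one_comm.mp hg.1, by simpa using hg.2⟩

theorem act_transpose_act {g} (hg : g ∈ SO3) (A) : act g.transpose (act g A) = A := by
  rw [act_act, mul_eq_one_comm.mp hg.1, act_one]

theorem map_re_act (g A) : (act g A).map Complex.re = g * A.map Complex.re * g.transpose := by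
  ext i j
  simp [act, Matrix.mul_apply]

theorem map_im_act (g A) : (act g A).map Complex.im = g * A.map Complex.im * g.transpose := by
  ext i j
  simp [act, Matrix.mul_apply]

theorem ext_re_im {A B : Matrix (Fin 3) (Fin 3) ℂ} (h1 : A.map Complex.re = B.map Complex.re)
    (h2 : A.map Complex.im = B.map Complex.im) : A = B := by
  ext i j
  exact Complex.ext (congrFun (congrFun h1 i) j) (congrFun (congrFun h2 i) j)

theorem diag_mem_V {z} (hz : z ∈ P) : Matrix.diagonal z ∈ Vset := by
  refine ⟨Matrix.diagonal_transpose z, ?_⟩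
  rw [Matrix.trace_diagonal, Fin.sum_univ_three]; exact hz

theorem diag_mem_M {z} (hz : z ∈ P) : Matrix.diagonal z ∈ Mset := by
  refine ⟨diag_mem_V hz, fun ξ hξ => ?_⟩
  have h1 : (Matrix.diagonal z).map (starRingEnd ℂ) = Matrix.diagonal (fun i => starRingEnd ℂ (z i)) :=
    Matrix.diagonal_map (by simp)
  rw [h1, sub_mul, Matrix.trace_sub, Matrix.mul_assoc, Matrix.mul_assoc, Matrix.trace_mul_comm (Matrix.diagonal z),
    Matrix.mul_assoc, Matrix.diagonal_mul_diagonal, Matrix.diagonal_mul_diagonal]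
  simp [mul_comm]

theorem commute_of_mem_M {A} (hA : A ∈ Mset) :
    A.map Complex.re * A.map Complex.im = A.map Complex.im * A.map Complex.re := by
  obtain ⟨⟨hs, _⟩, h⟩ := hA
  have h01 := h !![0,1,0;-1,0,0;0,0,0] (by ext i j; fin_cases i <;> fin_cases j <;> simp)
  have h02 := h !![0,0,1;0,0,0;-1,0,0] (by ext i j; fin_cases i <;> fin_cases j <;> simp)
  have h12 := h !![0,0,0;0,0,1;0,-1,0] (by ext i j; fin_cases i <;> fin_cases j <;> simp)
  have e1 : A 1 0 = A 0 1 := congrFun (congrFun hs 0) 1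
  have e2 : A 2 0 = A 0 2 := congrFun (congrFun hs 0) 2
  have e3 : A 2 1 = A 1 2 := congrFun (congrFun hs 1) 2
  simp [Matrix.trace, Fin.sum_univ_three, Matrix.mul_apply, e1, e2, e3] at h01 h02 h12
  ext i j
  fin_cases i <;> fin_cases j <;> simp [Matrix.mul_apply, Fin.sum_univ_three, e1, e2, e3] <;> linarith

theorem ofReal_orth {g : Matrix (Fin 3) (Fin 3) ℝ} (hg : g * g.transpose = 1) :
    g.map Complex.ofReal * (g.map Complex.ofReal).transpose = 1 := by
  rw [← Matrix.transpose_map]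
  have := congrArg (fun B => B.map Complex.ofRealHom) hg
  simp only [Matrix.map_mul, Matrix.map_one Complex.ofRealHom (map_zero _) (map_one _)] at this
  exact this

theorem exists_diag {A} (hA : A ∈ Mset) : ∃ g ∈ SO3, ∃ z ∈ P, act g A = Matrix.diagonal z := by
  have hs := hA.1.1
  have ht := hA.1.2
  obtain ⟨g, x, y, hg, hx, hy⟩ := simul_diag (A.map Complex.re) (A.map Complex.im)
    (by rw [← Matrix.transpose_map, hs]) (by rw [← Matrix.transpose_map, hs]) (commute_of_mem_M hA)
  have hact : act g A = Matrix.diagonal (fun i => (⟨x i, y i⟩ : ℂ)) := by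
    apply ext_re_im
    · rw [map_re_act, hx, Matrix.diagonal_map (by simp)]
    · rw [map_im_act, hy, Matrix.diagonal_map (by simp)]
  have hP : (fun i => (⟨x i, y i⟩ : ℂ)) ∈ P := by
    have := congrArg Matrix.trace hact
    have hg' : (g.map Complex.ofReal).transpose * g.map Complex.ofReal = 1 :=
      mul_eq_one_comm.mp (ofReal_orth hg)
    rw [act, Matrix.trace_mul_comm, ← Matrix.mul_assoc, hg', one_mul, ht, Matrix.trace_diagonal,
      Fin.sum_univ_three] at this
    exact this.symm
  rcases mem_SO3_neg hg with h | h
  · exact ⟨g, h, _, hP, hact⟩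
  · exact ⟨-g, h, _, hP, by rw [act_neg, hact]⟩

theorem perm_diag (σ : Equiv.Perm (Fin 3)) (z : Fin 3 → ℂ) :
    ∃ g ∈ SO3, act g (Matrix.diagonal z) = Matrix.diagonal (fun i => z (σ i)) := by
  let g : Matrix (Fin 3) (Fin 3) ℝ := σ.permMatrix ℝ
  have hg : g * g.transpose = 1 := by
    ext i j
    simp only [g, Matrix.mul_apply, Equiv.Perm.permMatrix, PEquiv.toMatrix_apply,
      Matrix.one_apply, Matrix.transpose_apply, Equiv.toPEquiv_apply, Option.mem_some_iff]
    rw [Finset.sum_eq_single (σ i)]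
    · by_cases h : i = j
      · simp [h]
      · simp [h, Ne.symm h]
    · intro k _ hk
      simp [Ne.symm hk]
    · simp
  have hact : act g (Matrix.diagonal z) = Matrix.diagonal (fun i => z (σ i)) := by
    ext i j
    by_cases h : i = j
    · simp [act, g, Matrix.mul_apply, Equiv.Perm.permMatrix, PEquiv.toMatrix_apply,
        Matrix.diagonal_apply, h, apply_ite]
    · simp [act, g, Matrix.mul_apply, Equiv.Perm.permMatrix, PEquiv.toMatrix_apply,
        Matrix.diagonal_apply, h, apply_ite]
  rcases mem_SO3_neg hg with h | h
  · exact ⟨g, h, hact⟩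
  · exact ⟨-g, h, by rw [act_neg, hact]⟩

theorem perm_of_act {g} (hg : g ∈ SO3) {z w : Fin 3 → ℂ}
    (h : Matrix.diagonal w = act g (Matrix.diagonal z)) :
    ∃ σ : Equiv.Perm (Fin 3), ∀ i, w i = z (σ i) := by
  apply perm_of_poly
  intro t
  have hg' : g.map Complex.ofReal * (g.map Complex.ofReal).transpose = 1 := ofReal_orth hg.1
  have e : ∀ v : Fin 3 → ℂ, ∏ i, (t - v i) = (t • (1 : Matrix (Fin 3) (Fin 3) ℂ) - Matrix.diagonal v).det := by
    intro v
    rw [← Matrix.diagonal_one, ← Matrix.diagonal_smul, Matrix.diagonal_sub, Matrix.det_diagonal]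
    simp
  rw [e, e, h]
  have : t • (1 : Matrix (Fin 3) (Fin 3) ℂ) - act g (Matrix.diagonal z) =
      g.map Complex.ofReal * (t • (1 : Matrix (Fin 3) (Fin 3) ℂ) - Matrix.diagonal z) * (g.map Complex.ofReal).transpose := by
    rw [Matrix.mul_sub, Matrix.sub_mul, act]
    simp [hg']
  rw [this, Matrix.det_mul, Matrix.det_mul, mul_right_comm, ← Matrix.det_mul, hg']
  simp

/-- The generic matrix whose entries are real (`false`) or imaginary (`true`) coordinates. -/
def gm (c : Bool) : Matrix (Fin 3) (Fin 3) (MvPolynomial ((Fin 3 × Fin 3) × Bool) ℝ) :=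
  Matrix.of fun i j => X ((i, j), c)

/-- The polynomial `tr (Re A)^a (Im A)^b`. -/
def tp (a b : ℕ) : MvPolynomial ((Fin 3 × Fin 3) × Bool) ℝ := (gm false ^ a * gm true ^ b).trace

theorem gm_pow_homog (c : Bool) (a : ℕ) : ∀ i j, ((gm c ^ a) i j).IsHomogeneous a := by
  induction a with
  | zero =>
    intro i j
    rw [pow_zero, Matrix.one_apply]
    split_ifs
    · exact isHomogeneous_one _ _
    · exact isHomogeneous_zero _ _ _
  | succ n ih =>
    intro i j
    rw [pow_succ, Matrix.mul_apply]
    exact IsHomogeneous.sum _ _ _ fun k _ => (ih i k).mul (isHomogeneous_X _ _)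

theorem tp_homog (a b : ℕ) : (tp a b).IsHomogeneous (a + b) := by
  refine IsHomogeneous.sum _ _ _ fun i _ => ?_
  rw [Matrix.diag_apply, Matrix.mul_apply]
  exact IsHomogeneous.sum _ _ _ fun k _ => (gm_pow_homog _ _ _ _).mul (gm_pow_homog _ _ _ _)

theorem evalR_tp (a b : ℕ) (A : Matrix (Fin 3) (Fin 3) ℂ) :
    evalR (tp a b) (fun q => A q.1 q.2) = (A.map Complex.re ^ a * A.map Complex.im ^ b).trace := by
  unfold evalR tp
  rw [AddMonoidHom.map_trace, ← RingHom.mapMatrix_apply, map_mul, map_pow, map_pow]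
  have h1 : ∀ c, (RingHom.mapMatrix (eval fun q : (Fin 3 × Fin 3) × Bool =>
      if q.2 = true then (A q.1.1 q.1.2).im else (A q.1.1 q.1.2).re)) (gm c) =
      if c then A.map Complex.im else A.map Complex.re := by
    intro c
    ext i j
    cases c <;> simp [gm]
  rw [h1, h1]
  simp

theorem conj_pow {g X : Matrix (Fin 3) (Fin 3) ℝ} (hg : g ∈ SO3) (n : ℕ) :
    (g * X * g.transpose) ^ n = g * X ^ n * g.transpose := by
  have h : g.transpose * g = 1 := mul_eq_one_comm.mp hg.1
  induction n with
  | zero => simp [hg.1]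
  | succ n ih =>
    rw [pow_succ, ih, pow_succ]
    calc _ = g * X ^ n * (g.transpose * g) * X * g.transpose := by simp only [Matrix.mul_assoc]
      _ = _ := by rw [h]; simp only [Matrix.mul_assoc, Matrix.mul_one]

theorem evalR_tp_act (a b : ℕ) {g} (hg : g ∈ SO3) (A : Matrix (Fin 3) (Fin 3) ℂ) :
    evalR (tp a b) (fun q => act g A q.1 q.2) = evalR (tp a b) (fun q => A q.1 q.2) := by
  have h : g.transpose * g = 1 := mul_eq_one_comm.mp hg.1
  rw [evalR_tp, evalR_tp, map_re_act, map_im_act, conj_pow hg, conj_pow hg]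
  calc _ = (g * (A.map Complex.re ^ a * (g.transpose * g) * A.map Complex.im ^ b) * g.transpose).trace := by
        simp only [Matrix.mul_assoc]
    _ = _ := by rw [Matrix.trace_mul_comm, ← Matrix.mul_assoc, h, Matrix.mul_one, Matrix.one_mul]

theorem evalR_tp_diag (a b : ℕ) (z : Fin 3 → ℂ) :
    evalR (tp a b) (fun q => Matrix.diagonal z q.1 q.2) = ∑ i, (z i).re ^ a * (z i).im ^ b := by
  rw [evalR_tp, Matrix.diagonal_map (by simp), Matrix.diagonal_map (by simp), Matrix.diagonal_pow,
    Matrix.diagonal_pow, Matrix.diagonal_mul_diagonal, Matrix.trace_diagonal]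
  rfl

/-- The invariant polynomial on matrices lifting the symmetrization of a monomial. -/
def lm (m : Fin 3 × Bool →₀ ℕ) : MvPolynomial ((Fin 3 × Fin 3) × Bool) ℝ :=
  C (1 / 6) *
    (tp (m (0, false)) (m (0, true)) * tp (m (1, false)) (m (1, true)) *
        tp (m (2, false)) (m (2, true))
      - tp (m (0, false) + m (1, false)) (m (0, true) + m (1, true)) *
        tp (m (2, false)) (m (2, true))
      - tp (m (0, false) + m (2, false)) (m (0, true) + m (2, true)) *
        tp (m (1, false)) (m (1, true))
      - tp (m (1, false) + m (2, false)) (m (1, true) + m (2, true)) *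
        tp (m (0, false)) (m (0, true))
      + C 2 * tp (m (0, false) + m (1, false) + m (2, false))
          (m (0, true) + m (1, true) + m (2, true)))

theorem lm_homog (m : Fin 3 × Bool →₀ ℕ) {d : ℕ} (hd : m.degree = d) : (lm m).IsHomogeneous d := by
  have hd' : d = m (0, false) + m (0, true) + (m (1, false) + m (1, true)) +
      (m (2, false) + m (2, true)) := by
    rw [← hd, Finsupp.degree_eq_sum, Fintype.sum_prod_type]
    simp [Fin.sum_univ_three]
    ring
  have key : ∀ {p : MvPolynomial ((Fin 3 × Fin 3) × Bool) ℝ} {k}, p.IsHomogeneous k → k = d →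
    p.IsHomogeneous d := fun h e => e ▸ h
  unfold lm
  refine IsHomogeneous.C_mul ?_ _
  refine ((((key (((tp_homog _ _).mul (tp_homog _ _)).mul (tp_homog _ _)) ?_).sub
    (key ((tp_homog _ _).mul (tp_homog _ _)) ?_)).sub
    (key ((tp_homog _ _).mul (tp_homog _ _)) ?_)).sub
    (key ((tp_homog _ _).mul (tp_homog _ _)) ?_)).add
    (IsHomogeneous.C_mul (key (tp_homog _ _) ?_) _)
  all_goals omega

theorem evalR_lm_act (m) {g} (hg : g ∈ SO3) (A : Matrix (Fin 3) (Fin 3) ℂ) :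
    evalR (lm m) (fun q => act g A q.1 q.2) = evalR (lm m) (fun q => A q.1 q.2) := by
  have h := fun a b => evalR_tp_act a b hg A
  unfold evalR at h ⊢
  simp only [lm, map_mul, map_sub, map_add, h, eval_C]

theorem sum_perm_three (F : Equiv.Perm (Fin 3) → ℝ) (f : Fin 3 → Fin 3 → Fin 3 → ℝ)
    (h : ∀ σ, F σ = f (σ 0) (σ 1) (σ 2)) :
    ∑ σ, F σ = f 0 1 2 + f 0 2 1 + f 1 0 2 + f 1 2 0 + f 2 0 1 + f 2 1 0 := by
  simp only [h]
  have : (Finset.univ : Finset (Equiv.Perm (Fin 3))) =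
    {1, Equiv.swap 1 2, Equiv.swap 0 1, Equiv.swap 0 1 * Equiv.swap 1 2,
      Equiv.swap 1 2 * Equiv.swap 0 1, Equiv.swap 0 2} := by decide
  rw [this]
  rw [Finset.sum_insert (by decide), Finset.sum_insert (by decide), Finset.sum_insert (by decide),
    Finset.sum_insert (by decide), Finset.sum_insert (by decide), Finset.sum_singleton]
  have e1 : (Equiv.swap (1 : Fin 3) 2) 0 = 0 := by decide
  have e2 : (Equiv.swap (0 : Fin 3) 1) 2 = 2 := by decide
  have e3 : (Equiv.swap (0 : Fin 3) 2) 1 = 1 := by decide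
  simp [e1, e2, e3]
  ring

theorem evalR_lm_diag (m : Fin 3 × Bool →₀ ℕ) (z : Fin 3 → ℂ) :
    evalR (lm m) (fun q => Matrix.diagonal z q.1 q.2) =
      1 / 6 * ∑ σ : Equiv.Perm (Fin 3), ∏ q : Fin 3 × Bool,
        (if q.2 then (z (σ q.1)).im else (z (σ q.1)).re) ^ m q := by
  rw [sum_perm_three _ (fun i j k => ((z i).re ^ m (0, false) * (z i).im ^ m (0, true)) *
    ((z j).re ^ m (1, false) * (z j).im ^ m (1, true)) *
    ((z k).re ^ m (2, false) * (z k).im ^ m (2, true)))]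
  · have h := fun a b => evalR_tp_diag a b z
    unfold evalR at h ⊢
    simp only [lm, map_mul, map_sub, map_add, h, eval_C, Fin.sum_univ_three, pow_add]
    ring
  · intro σ
    rw [Fintype.prod_prod_type]
    simp [Fin.prod_univ_three]
    ring

/-- The invariant polynomial lifting a polynomial on the plane. -/
def lp (p : MvPolynomial (Fin 3 × Bool) ℝ) : MvPolynomial ((Fin 3 × Fin 3) × Bool) ℝ :=
  ∑ m ∈ p.support, C (p.coeff m) * lm m

theorem lp_homog {p d} (hp : p.IsHomogeneous d) : (lp p).IsHomogeneous d := by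
  refine IsHomogeneous.sum _ _ _ fun m hm => IsHomogeneous.C_mul (lm_homog m ?_) _
  by_contra h
  exact (mem_support_iff.mp hm) (hp.coeff_eq_zero h)

theorem evalR_lp (p) (w) : evalR (lp p) w = ∑ m ∈ p.support, p.coeff m * evalR (lm m) w := by
  simp [evalR, lp, map_sum]

theorem evalR_lp_act (p) {g} (hg : g ∈ SO3) (A : Matrix (Fin 3) (Fin 3) ℂ) :
    evalR (lp p) (fun q => act g A q.1 q.2) = evalR (lp p) (fun q => A q.1 q.2) := by
  simp only [evalR_lp, evalR_lm_act _ hg]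

theorem evalR_lp_diag {p : MvPolynomial (Fin 3 × Bool) ℝ} {z}
    (h : ∀ σ : Equiv.Perm (Fin 3), evalR p (fun i => z (σ i)) = evalR p z) :
    evalR (lp p) (fun q => Matrix.diagonal z q.1 q.2) = evalR p z := by
  have : ∑ σ : Equiv.Perm (Fin 3), evalR p (fun i => z (σ i)) = 6 * evalR p z := by
    simp only [h, Finset.sum_const, Finset.card_univ, Fintype.card_perm, Fintype.card_fin]
    simp [Nat.factorial]
  have h2 : evalR (lp p) (fun q => Matrix.diagonal z q.1 q.2) =
      1 / 6 * ∑ σ : Equiv.Perm (Fin 3), evalR p (fun i => z (σ i)) := by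
    simp only [evalR_lp, evalR_lm_diag]
    unfold evalR
    simp only [eval_eq']
    rw [Finset.sum_comm, Finset.mul_sum]
    refine Finset.sum_congr rfl fun m _ => ?_
    rw [← Finset.mul_sum]
    ring
  rw [h2, this]; ring

/-- Restriction of a polynomial to diagonal matrices. -/
def rp (p : MvPolynomial ((Fin 3 × Fin 3) × Bool) ℝ) : MvPolynomial (Fin 3 × Bool) ℝ :=
  aeval (fun q : (Fin 3 × Fin 3) × Bool => if q.1.1 = q.1.2 then X (q.1.1, q.2) else 0) p

theorem rp_homog {p d} (hp : p.IsHomogeneous d) : (rp p).IsHomogeneous d := by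
  have := hp.aeval (n := 1) (fun q : (Fin 3 × Fin 3) × Bool =>
    if q.1.1 = q.1.2 then (X (q.1.1, q.2) : MvPolynomial (Fin 3 × Bool) ℝ) else 0) (by
      intro q
      split_ifs
      · exact isHomogeneous_X _ _
      · exact isHomogeneous_zero _ _ _)
  simpa [rp] using this

theorem evalR_rp (p z) : evalR (rp p) z = evalR p (fun q => Matrix.diagonal z q.1 q.2) := by
  unfold evalR rp
  rw [aeval_def, eval₂_eq_eval_map, ← eval₂_eq_eval_map, ← coe_eval₂Hom, ← RingHom.comp_apply]
  congr 1
  apply MvPolynomial.ringHom_ext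
  · intro r; simp
  · rintro ⟨⟨i, j⟩, c⟩
    by_cases h : i = j
    · simp [h]
    · simp [h]

theorem relM_equivalence : Equivalence relM where
  refl A := ⟨1, ⟨by simp, by simp⟩, (act_one _).symm⟩
  symm := by
    rintro A B ⟨g, hg, h⟩
    exact ⟨g.transpose, SO3_transpose hg, by rw [h, act_transpose_act hg]⟩
  trans := by
    rintro A B D ⟨g, hg, h⟩ ⟨k, hk, h'⟩
    refine ⟨k * g, ⟨?_, by rw [Matrix.det_mul, hk.2, hg.2, one_mul]⟩, by rw [h', h, act_act]⟩
    calc _ = k * (g * g.transpose) * k.transpose := by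
          simp only [Matrix.transpose_mul, Matrix.mul_assoc]
      _ = 1 := by rw [hg.1, Matrix.mul_one, hk.1]

/-- The embedding of the plane as diagonal matrices. -/
def dg (z : P) : Mset := ⟨Matrix.diagonal z, diag_mem_M z.2⟩

theorem dg_continuous : Continuous dg := by
  unfold dg
  exact Continuous.subtype_mk (Continuous.matrix_diagonal continuous_subtype_val) _

/-- The induced map on quotients. -/
def psi : Y → M₀ := Quot.lift (fun z => Quot.mk relM (dg z)) (by
  rintro z w ⟨σ, h⟩
  obtain ⟨g, hg, hact⟩ := perm_diag σ z
  refine Quot.sound ⟨g, hg, ?_⟩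
  change Matrix.diagonal _ = act g (Matrix.diagonal _)
  rw [hact]
  congr 1
  exact funext h)

theorem psi_mk (z : P) : psi (Quot.mk _ z) = Quot.mk relM (dg z) := rfl

theorem psi_continuous : Continuous psi :=
  continuous_quot_lift _ (continuous_quot_mk.comp dg_continuous)

theorem psi_injective : Function.Injective psi := by
  rintro ⟨z⟩ ⟨w⟩ h
  obtain ⟨g, hg, h'⟩ := (Quotient.exact (s := ⟨relM, relM_equivalence⟩) h)
  exact Quot.sound (perm_of_act hg h')

theorem exists_dg (A : Mset) : ∃ g ∈ SO3, ∃ z : P, (dg z : Matrix (Fin 3) (Fin 3) ℂ) = act g A := by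
  obtain ⟨g, hg, z, hz, h⟩ := exists_diag A.2
  exact ⟨g, hg, ⟨z, hz⟩, h.symm⟩

theorem psi_surjective : Function.Surjective psi := by
  rintro ⟨A⟩
  obtain ⟨g, hg, z, h⟩ := exists_dg A
  exact ⟨Quot.mk _ z, (Quot.sound ⟨g, hg, h⟩ : Quot.mk relM A = Quot.mk relM (dg z)).symm⟩

theorem SO3_compact : IsCompact SO3 := by
  have hsub : SO3 ⊆ Set.pi Set.univ fun _ : Fin 3 => Set.pi Set.univ fun _ : Fin 3 => Set.Icc (-1 : ℝ) 1 := by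
    intro g hg i _ j _
    have h := congrFun (congrFun hg.1 i) i
    simp only [Matrix.mul_apply, Matrix.transpose_apply, Matrix.one_apply_eq] at h
    have h2 : g i j * g i j ≤ 1 := by
      rw [← h]
      exact Finset.single_le_sum (f := fun k => g i k * g i k) (fun k _ => mul_self_nonneg _) (Finset.mem_univ j)
    exact abs_le.mp (abs_le_one_iff_mul_self_le_one.mpr h2)
  refine IsCompact.of_isClosed_subset
    (isCompact_univ_pi fun _ => isCompact_univ_pi fun _ => isCompact_Icc) ?_ hsub
  apply IsClosed.inter
  · exact isClosed_eq (by fun_prop) continuous_const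
  · exact isClosed_eq (Continuous.matrix_det continuous_id) continuous_const

theorem dg_isClosedMap {S : Set P} (hS : IsClosed S) :
    IsClosed {B : Matrix (Fin 3) (Fin 3) ℂ | ∃ z ∈ S, Matrix.diagonal (z : Fin 3 → ℂ) = B} := by
  have hP : IsClosed P := isClosed_eq (by fun_prop) continuous_const
  have h1 : IsClosed (Subtype.val '' S) := hP.isClosedEmbedding_subtypeVal.isClosedMap S hS
  have : {B : Matrix (Fin 3) (Fin 3) ℂ | ∃ z ∈ S, Matrix.diagonal (z : Fin 3 → ℂ) = B} =
      {B | Matrix.diag B ∈ Subtype.val '' S} ∩ {B | Matrix.diagonal (Matrix.diag B) = B} := by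
    ext B
    constructor
    · rintro ⟨z, hz, rfl⟩
      exact ⟨⟨z, hz, by simp⟩, by simp⟩
    · rintro ⟨⟨z, hz, h⟩, h'⟩
      exact ⟨z, hz, by rw [h]; exact h'⟩
  rw [this]
  apply IsClosed.inter
  · exact h1.preimage (Continuous.matrix_diag continuous_id)
  · exact isClosed_eq (Continuous.matrix_diagonal (Continuous.matrix_diag continuous_id)) continuous_id

theorem psi_isClosedMap : IsClosedMap psi := by
  intro S hS
  have hS' : IsClosed ((Quot.mk relP) ⁻¹' S) := hS.preimage continuous_quot_mk
  apply (isQuotientMap_quot_mk (r := relM)).isClosed_preimage.mp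
  have : CompactSpace SO3 := isCompact_iff_compactSpace.mp SO3_compact
  have hact : Continuous fun q : SO3 × Mset => act q.1 (q.2 : Matrix (Fin 3) (Fin 3) ℂ) := by
    have hm : Continuous fun q : SO3 × Mset =>
        (q.1 : Matrix (Fin 3) (Fin 3) ℝ).map Complex.ofReal :=
      Continuous.matrix_map (continuous_subtype_val.comp continuous_fst) Complex.continuous_ofReal
    exact (hm.matrix_mul (continuous_subtype_val.comp continuous_snd)).matrix_mul hm.matrix_transpose
  have hc := isClosedMap_snd_of_compactSpace _ ((dg_isClosedMap hS').preimage hact)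
  convert hc using 1
  ext A
  constructor
  · rintro ⟨y, hy, h⟩
    induction y using Quot.ind with
    | mk z =>
    obtain ⟨g, hg, h'⟩ := (Quotient.exact (s := ⟨relM, relM_equivalence⟩) h.symm)
    exact ⟨(⟨g, hg⟩, A), ⟨z, hy, h'⟩, rfl⟩
  · rintro ⟨⟨g, B⟩, ⟨z, hz, h⟩, rfl⟩
    exact ⟨Quot.mk _ z, hz, (Quot.sound ⟨g, g.2, h⟩ : Quot.mk relM B = Quot.mk relM (dg z)).symm⟩

/-- The inverse homeomorphism. -/
def psiH : Y ≃ₜ M₀ :=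
  (Equiv.ofBijective psi ⟨psi_injective, psi_surjective⟩).toHomeomorphOfContinuousClosed
    psi_continuous psi_isClosedMap

theorem psiH_mk (z : P) : psiH (Quot.mk _ z) = Quot.mk relM (dg z) := rfl

theorem mem_RegM {d f} (hf : f ∈ RegY d) : f ∘ psiH.symm ∈ RegM d := by
  obtain ⟨p, hp, hinv, hev⟩ := hf
  refine ⟨lp p, lp_homog hp, fun g hg A _ => evalR_lp_act p hg A, fun A => ?_⟩
  obtain ⟨g, hg, z, h⟩ := exists_dg A
  have h1 : (Quot.mk relM A : M₀) = psiH (Quot.mk _ z) := Quot.sound ⟨g, hg, h⟩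
  change f (psiH.symm (Quot.mk relM A)) = _
  have h2 : psiH.symm (Quot.mk relM A) = (Quot.mk relP z : Y) :=
    psiH.toEquiv.symm_apply_eq.mpr h1
  rw [h2, hev, ← evalR_lp_diag fun σ => hinv σ z z.2, ← evalR_lp_act p hg A, ← h]
  rfl

theorem mem_RegY {d f} (hf : f ∈ RegM d) : f ∘ psiH ∈ RegY d := by
  obtain ⟨p, hp, hinv, hev⟩ := hf
  refine ⟨rp p, rp_homog hp, fun σ z hz => ?_, fun z => ?_⟩
  · obtain ⟨g, hg, h⟩ := perm_diag σ z
    rw [evalR_rp, evalR_rp, ← h, hinv g hg _ (diag_mem_V hz)]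
  · rw [evalR_rp]
    exact hev (dg z)

/-- The symplectic quotient of the SO(3)-module of traceless symmetric matrices (the
SU(2)-module R₄) admits a ℤ-graded regular diffeomorphism to the linear symplectic orbifold
`ℂ²/S₃` realized as `P/S₃`. -/
theorem graded_regular_diffeomorphism_R4_to_C2_mod_S3 :
    ∃ χ : M₀ ≃ₜ Y, ∀ d : ℕ, (fun f : Y → ℝ => f ∘ ⇑χ) '' RegY d = RegM d := by
  refine ⟨psiH.symm, fun d => Set.Subset.antisymm ?_ ?_⟩
  · rintro _ ⟨f, hf, rfl⟩
    exact mem_RegM hf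
  · intro f hf
    refine ⟨f ∘ psiH, mem_RegY hf, ?_⟩
    funext x
    simp

end

end Stmt11
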